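/- arXiv:2305.05863 — 10 statements merged into one kernel-verified Lean document; each statement's English description precedes it below -/
import Mathlib

section
/- Let N and d be positive integers, let w₁,…,w_N be strictly positive real weights with W = diag(w₁,…,w_N), let A ∈ ℝ^{N×d} satisfy AᵀWA = I_d, let f ∈ ℝ^N and α = AᵀWf. Given λ > 0 and penalty parameters μ₁,…,μ_d > 0, the vector γ ∈ ℝ^d defined by γ_ℓ = S_{λμ_ℓ}(α_ℓ) (soft thresholding of the hyperinterpolation coefficients) is the unique minimizer over ℝ^d of the ℓ₁-regularized least squares functional z ↦ (1/2)‖W^{1/2}(Az − f)‖₂² + λ·∑_{ℓ=1}^d μ_ℓ|z_ℓ|. -/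
/-!
Orthonormality `AᵀWA = I` decouples the functional: up to the constant `½ ∑ w f²` it is the sum
over `ℓ` of the one-variable functions `t ↦ t²/2 - α_ℓ t + λ μ_ℓ |t|` (`lasso_functional_eq`).
Each of these is 1-strongly convex with minimizer `S_{λμ_ℓ}(α_ℓ)`, so it exceeds its minimum by
at least `(t - S_{λμ_ℓ}(α_ℓ))²/2` (`softThreshold_quadratic_growth`). Summing, the functional at `z`
exceeds its value at `γ` by at least `½ ∑ (z_ℓ - γ_ℓ)²`, which gives both minimality and uniqueness.
-/

open Finset

/-- The soft thresholding operator `S_k(a) = max(0, a−k) + min(0, a+k)`. -/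
def softThreshold (k a : ℝ) : ℝ := max 0 (a - k) + min 0 (a + k)

/-- Quadratic growth of `t ↦ t²/2 - a t + k |t|` around its minimizer `softThreshold k a`. -/
lemma softThreshold_quadratic_growth {k : ℝ} (hk : 0 ≤ k) (a t : ℝ) :
    (softThreshold k a ^ 2 / 2 - a * softThreshold k a + k * |softThreshold k a|)
      + (t - softThreshold k a) ^ 2 / 2 ≤ t ^ 2 / 2 - a * t + k * |t| := by
  have h1 : k * t ≤ k * |t| := mul_le_mul_of_nonneg_left (le_abs_self t) hk
  have h2 : k * (-t) ≤ k * |t| := mul_le_mul_of_nonneg_left (neg_le_abs t) hk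
  unfold softThreshold
  rcases lt_or_ge k a with ha | ha
  · rw [max_eq_right (by linarith), min_eq_left (by linarith), add_zero,
      abs_of_nonneg (by linarith)]
    nlinarith
  rcases lt_or_ge a (-k) with hb | hb
  · rw [max_eq_left (by linarith), min_eq_right (by linarith), zero_add,
      abs_of_nonpos (by linarith)]
    nlinarith
  · rw [max_eq_left (by linarith), min_eq_left (by linarith), add_zero, abs_zero]
    have h3 : a * t ≤ k * |t| :=
      (le_abs_self _).trans ((abs_mul a t).trans_le
        (mul_le_mul_of_nonneg_right (abs_le.2 ⟨hb, ha⟩) (abs_nonneg t)))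
    linarith

/-- Discrete Parseval identity: the columns of `A` are orthonormal for the weights `w`. -/
lemma weighted_parseval {N d : ℕ} (w : Fin N → ℝ) (A : Fin N → Fin d → ℝ)
    (horth : ∀ i k : Fin d, ∑ j, w j * A j i * A j k = if i = k then 1 else 0)
    (z : Fin d → ℝ) :
    ∑ j, w j * (∑ ℓ, A j ℓ * z ℓ) ^ 2 = ∑ ℓ, z ℓ ^ 2 := by
  calc ∑ j, w j * (∑ ℓ, A j ℓ * z ℓ) ^ 2
      = ∑ j, ∑ i, ∑ k, z i * z k * (w j * A j i * A j k) := by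
        refine Finset.sum_congr rfl fun j _ => ?_
        rw [sq, Finset.sum_mul_sum, Finset.mul_sum]
        refine Finset.sum_congr rfl fun i _ => ?_
        rw [Finset.mul_sum]
        exact Finset.sum_congr rfl fun k _ => by ring
    _ = ∑ i, ∑ k, z i * z k * ∑ j, w j * A j i * A j k := by
        rw [Finset.sum_comm]
        refine Finset.sum_congr rfl fun i _ => ?_
        rw [Finset.sum_comm]
        exact Finset.sum_congr rfl fun k _ => (Finset.mul_sum _ _ _).symm
    _ = ∑ ℓ, z ℓ ^ 2 := by
        simp [horth, sq]

/-- The regularized least squares functional is separable in the coefficients, up to a constant. -/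
lemma lasso_functional_eq {N d : ℕ} (w : Fin N → ℝ) (A : Fin N → Fin d → ℝ)
    (horth : ∀ i k : Fin d, ∑ j, w j * A j i * A j k = if i = k then 1 else 0)
    (f : Fin N → ℝ) (α : Fin d → ℝ) (hα : ∀ ℓ, α ℓ = ∑ j, w j * f j * A j ℓ)
    (lam : ℝ) (μ z : Fin d → ℝ) :
    (1 / 2) * (∑ j, w j * ((∑ ℓ, A j ℓ * z ℓ) - f j) ^ 2) + lam * ∑ ℓ, μ ℓ * |z ℓ|
      = (1 / 2) * (∑ j, w j * f j ^ 2)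
        + ∑ ℓ, (z ℓ ^ 2 / 2 - α ℓ * z ℓ + lam * μ ℓ * |z ℓ|) := by
  have hcross : ∑ j, w j * f j * (∑ ℓ, A j ℓ * z ℓ) = ∑ ℓ, α ℓ * z ℓ := by
    simp_rw [hα, Finset.mul_sum, Finset.sum_mul]
    rw [Finset.sum_comm]
    exact Finset.sum_congr rfl fun ℓ _ => Finset.sum_congr rfl fun j _ => by ring
  have hexp : ∑ j, w j * ((∑ ℓ, A j ℓ * z ℓ) - f j) ^ 2
      = ∑ ℓ, z ℓ ^ 2 - 2 * ∑ ℓ, α ℓ * z ℓ + ∑ j, w j * f j ^ 2 := by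
    rw [← weighted_parseval w A horth z, ← hcross, Finset.mul_sum, ← Finset.sum_sub_distrib,
      ← Finset.sum_add_distrib]
    exact Finset.sum_congr rfl fun j _ => by ring
  have hpen : ∑ ℓ, lam * μ ℓ * |z ℓ| = lam * ∑ ℓ, μ ℓ * |z ℓ| := by
    simp_rw [Finset.mul_sum, mul_assoc]
  rw [hexp, Finset.sum_add_distrib, Finset.sum_sub_distrib, ← Finset.sum_div, hpen]
  ring

/-- Lasso hyperinterpolation, obtained by soft thresholding the
hyperinterpolation coefficients, is the unique minimizer of the ℓ₁-regularized
discrete least squares functional. -/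
theorem lasso_hyperinterpolation_solution
    (N d : ℕ) (hN : 0 < N) (hd : 0 < d)
    (w : Fin N → ℝ) (hw : ∀ j, 0 < w j)
    (A : Fin N → Fin d → ℝ)
    (horth : ∀ i k : Fin d, ∑ j, w j * A j i * A j k = if i = k then 1 else 0)
    (f : Fin N → ℝ) (α : Fin d → ℝ)
    (hα : ∀ ℓ, α ℓ = ∑ j, w j * f j * A j ℓ)
    (lam : ℝ) (hlam : 0 < lam)
    (μ : Fin d → ℝ) (hμ : ∀ ℓ, 0 < μ ℓ)
    (γ : Fin d → ℝ)
    (hγ : ∀ ℓ, γ ℓ = softThreshold (lam * μ ℓ) (α ℓ)) :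
    (∀ z : Fin d → ℝ,
      (1 / 2) * (∑ j, w j * ((∑ ℓ, A j ℓ * γ ℓ) - f j) ^ 2)
          + lam * ∑ ℓ, μ ℓ * |γ ℓ|
        ≤ (1 / 2) * (∑ j, w j * ((∑ ℓ, A j ℓ * z ℓ) - f j) ^ 2)
          + lam * ∑ ℓ, μ ℓ * |z ℓ|) ∧
    (∀ z : Fin d → ℝ,
      (1 / 2) * (∑ j, w j * ((∑ ℓ, A j ℓ * z ℓ) - f j) ^ 2)
          + lam * ∑ ℓ, μ ℓ * |z ℓ|
        = (1 / 2) * (∑ j, w j * ((∑ ℓ, A j ℓ * γ ℓ) - f j) ^ 2)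
          + lam * ∑ ℓ, μ ℓ * |γ ℓ| → z = γ) := by
  have growth : ∀ z : Fin d → ℝ,
      ∑ ℓ, (γ ℓ ^ 2 / 2 - α ℓ * γ ℓ + lam * μ ℓ * |γ ℓ|) + ∑ ℓ, (z ℓ - γ ℓ) ^ 2 / 2
        ≤ ∑ ℓ, (z ℓ ^ 2 / 2 - α ℓ * z ℓ + lam * μ ℓ * |z ℓ|) := by
    intro z
    rw [← Finset.sum_add_distrib]
    refine Finset.sum_le_sum fun ℓ _ => ?_
    rw [hγ ℓ]
    exact softThreshold_quadratic_growth (mul_pos hlam (hμ ℓ)).le (α ℓ) (z ℓ)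
  have hnonneg : ∀ z : Fin d → ℝ, 0 ≤ ∑ ℓ, (z ℓ - γ ℓ) ^ 2 / 2 :=
    fun z => Finset.sum_nonneg fun ℓ _ => by positivity
  simp only [lasso_functional_eq w A horth f α hα lam μ]
  refine ⟨fun z => by linarith [growth z, hnonneg z], fun z hz => ?_⟩
  have hzero : ∑ ℓ, (z ℓ - γ ℓ) ^ 2 / 2 = 0 :=
    le_antisymm (by linarith [growth z]) (hnonneg z)
  rw [Finset.sum_eq_zero_iff_of_nonneg fun ℓ _ => by positivity] at hzero
  funext ℓ
  have hℓ := hzero ℓ (Finset.mem_univ ℓ)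
  have hsq : (z ℓ - γ ℓ) ^ 2 = 0 := by linarith
  exact sub_eq_zero.1 (pow_eq_zero_iff two_ne_zero |>.1 hsq)
end

section
/- Let N and d be positive integers, let w₁,…,w_N be strictly positive real weights with W = diag(w₁,…,w_N), let A ∈ ℝ^{N×d} satisfy AᵀWA = I_d, let f ∈ ℝ^N and α = AᵀWf. Given λ > 0, the vector ν ∈ ℝ^d defined by ν_ℓ = η_H(α_ℓ, λ) (hard thresholding of the hyperinterpolation coefficients) is a global minimizer over ℝ^d of the ℓ₀-regularized least squares functional z ↦ ‖W^{1/2}(Az − f)‖₂² + λ²·‖z‖₀. -/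
/-!
Orthonormality of the columns of `A` for the weighted inner product turns the least squares
term into `∑ ℓ, (z ℓ ^ 2 - 2 * z ℓ * α ℓ)` plus a constant independent of `z`
(`weighted_residual_expand`). Counting nonzero entries is also a sum over coordinates, so the
functional separates, and it suffices to minimize `t ^ 2 - 2 * t * a + lam ^ 2 * [t ≠ 0]` over
the reals: the value is `0` at `t = 0` and at least `lam ^ 2 - a ^ 2`, attained at `t = a`,
for `t ≠ 0`. Comparing the two values gives exactly hard thresholding (`hardThreshold_scalar_le`).
-/

open Finset

/-- The hard thresholding operator `η_H(a,k)`: keeps `a` if `|a| > k`, else `0`. -/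
noncomputable def hardThreshold (a k : ℝ) : ℝ := if k < |a| then a else 0

theorem weighted_residual_expand {N d : ℕ} (w : Fin N → ℝ) (A : Fin N → Fin d → ℝ)
    (horth : ∀ i k : Fin d, ∑ j, w j * A j i * A j k = if i = k then 1 else 0)
    (f : Fin N → ℝ) (α : Fin d → ℝ) (hα : ∀ ℓ, α ℓ = ∑ j, w j * f j * A j ℓ)
    (z : Fin d → ℝ) :
    ∑ j, w j * ((∑ ℓ, A j ℓ * z ℓ) - f j) ^ 2
      = ∑ ℓ, (z ℓ ^ 2 - 2 * z ℓ * α ℓ) + ∑ j, w j * f j ^ 2 := by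
  have hquad : ∑ j, w j * (∑ ℓ, A j ℓ * z ℓ) ^ 2 = ∑ ℓ, z ℓ ^ 2 := by
    calc ∑ j, w j * (∑ ℓ, A j ℓ * z ℓ) ^ 2
        = ∑ j, ∑ i, ∑ k, z i * z k * (w j * A j i * A j k) := by
          refine Finset.sum_congr rfl fun j _ => ?_
          rw [sq, Finset.sum_mul_sum, Finset.mul_sum]
          refine Finset.sum_congr rfl fun i _ => ?_
          rw [Finset.mul_sum]
          exact Finset.sum_congr rfl fun k _ => by ring
      _ = ∑ i, ∑ k, z i * z k * ∑ j, w j * A j i * A j k := by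
          rw [Finset.sum_comm]
          refine Finset.sum_congr rfl fun i _ => ?_
          rw [Finset.sum_comm]
          exact Finset.sum_congr rfl fun k _ => by rw [Finset.mul_sum]
      _ = ∑ ℓ, z ℓ ^ 2 := by
          simp [horth, sq]
  have hcross : ∑ j, w j * (2 * (∑ ℓ, A j ℓ * z ℓ) * f j) = ∑ ℓ, 2 * z ℓ * α ℓ := by
    simp only [hα, Finset.mul_sum, Finset.sum_mul]
    rw [Finset.sum_comm]
    exact Finset.sum_congr rfl fun ℓ _ => Finset.sum_congr rfl fun j _ => by ring
  rw [Finset.sum_sub_distrib, ← hquad, ← hcross, ← Finset.sum_sub_distrib,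
    ← Finset.sum_add_distrib]
  exact Finset.sum_congr rfl fun j _ => by ring

theorem hardThreshold_scalar_le (a lam t : ℝ) (hlam : 0 < lam) :
    hardThreshold a lam ^ 2 - 2 * hardThreshold a lam * a
        + lam ^ 2 * (if hardThreshold a lam ≠ 0 then 1 else 0)
      ≤ t ^ 2 - 2 * t * a + lam ^ 2 * (if t ≠ 0 then 1 else 0) := by
  unfold hardThreshold
  by_cases h : lam < |a|
  · have ha : a ≠ 0 := abs_pos.mp (hlam.trans h)
    have hsq : lam ^ 2 < a ^ 2 := by
      rw [← sq_abs a]; gcongr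
    by_cases ht : t = 0
    · simp [h, ha, ht]; nlinarith
    · simp [h, ha, ht]; nlinarith [sq_nonneg (t - a)]
  · have hsq : a ^ 2 ≤ lam ^ 2 := by
      rw [← sq_abs a]; gcongr; exact not_lt.mp h
    by_cases ht : t = 0
    · simp [h, ht]
    · simp [h, ht]; nlinarith [sq_nonneg (t - a)]

/-- Hard thresholding hyperinterpolation is a global minimizer of the
ℓ₀-regularized discrete least squares functional. -/
theorem hard_thresholding_hyperinterpolation_solution
    (N d : ℕ) (hN : 0 < N) (hd : 0 < d)
    (w : Fin N → ℝ) (hw : ∀ j, 0 < w j)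
    (A : Fin N → Fin d → ℝ)
    (horth : ∀ i k : Fin d, ∑ j, w j * A j i * A j k = if i = k then 1 else 0)
    (f : Fin N → ℝ) (α : Fin d → ℝ)
    (hα : ∀ ℓ, α ℓ = ∑ j, w j * f j * A j ℓ)
    (lam : ℝ) (hlam : 0 < lam)
    (ν : Fin d → ℝ)
    (hν : ∀ ℓ, ν ℓ = hardThreshold (α ℓ) lam) :
    ∀ z : Fin d → ℝ,
      (∑ j, w j * ((∑ ℓ, A j ℓ * ν ℓ) - f j) ^ 2)
          + lam ^ 2 * ((univ.filter fun ℓ => ν ℓ ≠ 0).card : ℝ)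
        ≤ (∑ j, w j * ((∑ ℓ, A j ℓ * z ℓ) - f j) ^ 2)
          + lam ^ 2 * ((univ.filter fun ℓ => z ℓ ≠ 0).card : ℝ) := by
  intro z
  -- Both sides become sums over coordinates plus the same constant.
  have hsep : ∀ y : Fin d → ℝ,
      (∑ j, w j * ((∑ ℓ, A j ℓ * y ℓ) - f j) ^ 2)
          + lam ^ 2 * ((univ.filter fun ℓ => y ℓ ≠ 0).card : ℝ)
        = ∑ ℓ, (y ℓ ^ 2 - 2 * y ℓ * α ℓ + lam ^ 2 * (if y ℓ ≠ 0 then 1 else 0))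
          + ∑ j, w j * f j ^ 2 := by
    intro y
    rw [weighted_residual_expand w A horth f α hα y, Finset.sum_add_distrib,
      ← Finset.mul_sum, Finset.sum_boole]
    ring
  rw [hsep, hsep]
  refine add_le_add_left (Finset.sum_le_sum fun ℓ _ => ?_) _
  rw [hν ℓ]
  exact hardThreshold_scalar_le (α ℓ) lam (z ℓ) hlam
end

section
/- Let N and d be positive integers, let w₁,…,w_N be strictly positive real weights with W = diag(w₁,…,w_N), let A ∈ ℝ^{N×d} satisfy AᵀWA = I_d, let f ∈ ℝ^N and α = AᵀWf. Given λ > 0, penalty parameters μ₁,…,μ_d > 0 and real numbers b₁,…,b_d ≥ 0 with B = diag(b₁,…,b_d), set h_ℓ = 1/(1 + b_ℓ²) ∈ (0,1]. Then the vector β ∈ ℝ^d defined by β_ℓ = h_ℓ·S_{λμ_ℓ}(α_ℓ) = S_{λμ_ℓ}(α_ℓ)/(1 + b_ℓ²) is the unique minimizer over ℝ^d of the ℓ₂² + ℓ₁-regularized least squares functional z ↦ (1/2)‖W^{1/2}(Az − f)‖₂² + (1/2)‖W^{1/2}ABz‖₂² + λ·∑_{ℓ=1}^d μ_ℓ|z_ℓ|.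 -/
/-! Discrete orthonormality gives the Parseval identity `‖W^{1/2} A x‖² = ‖x‖²`, so expanding the
squares turns the functional into `½‖W^{1/2} f‖²` plus a sum of decoupled one-variable functions
`q(z) = (1 + b²)/2 · z² − α z + λμ|z|`. Each `q` is strongly convex with modulus `1 + b²`, and
soft thresholding satisfies its optimality condition, whence
`q(β) + (1 + b²)/2 · (z − β)² ≤ q(z)` (`scalar_growth`). Summing over the coordinates gives
both minimality and, since `1 + b² > 0`, uniqueness. -/

open Finset

/-- Quadratic growth of `z ↦ c/2 · z² − a z + k|z|` around its minimizer `S_k(a)/c`. -/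
lemma scalar_growth (k a c x z : ℝ) (hk : 0 ≤ k) (hc : 0 < c)
    (hx : c * x = softThreshold k a) :
    c / 2 * x ^ 2 - a * x + k * |x| + c / 2 * (z - x) ^ 2
      ≤ c / 2 * z ^ 2 - a * z + k * |z| := by
  -- The subgradient inequality `(a - S_k(a)) ∈ k ∂|·|(x)`.
  have key : 0 ≤ (c * x - a) * (z - x) + k * (|z| - |x|) := by
    have h1 := mul_le_mul_of_nonneg_left (le_abs_self z) hk
    have h2 := mul_le_mul_of_nonneg_left (neg_abs_le z) hk
    unfold softThreshold at hx
    rcases lt_or_ge k a with h | h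
    · rw [max_eq_right (by linarith), min_eq_left (by linarith)] at hx
      have hx0 : 0 < x := by
        by_contra! hn
        nlinarith
      rw [abs_of_pos hx0, hx]
      nlinarith
    · rw [max_eq_left (by linarith)] at hx
      rcases lt_or_ge a (-k) with h' | h'
      · rw [min_eq_right (by linarith)] at hx
        have hx0 : x < 0 := by
          by_contra! hn
          nlinarith
        rw [abs_of_neg hx0, hx]
        nlinarith
      · rw [min_eq_left (by linarith), add_zero] at hx
        have hx0 : x = 0 := by
          rcases mul_eq_zero.mp hx with h0 | h0
          · exact absurd h0 hc.ne'
          · exact h0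
        subst hx0
        have h3 : |a * z| ≤ k * |z| := by
          rw [abs_mul]
          exact mul_le_mul_of_nonneg_right (abs_le.mpr ⟨h', h⟩) (abs_nonneg z)
        have h4 := le_abs_self (a * z)
        simp only [mul_zero, zero_sub, sub_zero, abs_zero]
        linarith
  nlinarith

lemma parseval {N d : ℕ} (w : Fin N → ℝ) (A : Fin N → Fin d → ℝ)
    (horth : ∀ i k : Fin d, ∑ j, w j * A j i * A j k = if i = k then 1 else 0)
    (x : Fin d → ℝ) :
    ∑ j, w j * (∑ l, A j l * x l) ^ 2 = ∑ l, x l ^ 2 := by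
  calc ∑ j, w j * (∑ l, A j l * x l) ^ 2
      = ∑ j, ∑ i, ∑ k, x i * x k * (w j * A j i * A j k) := by
        refine Finset.sum_congr rfl fun j _ => ?_
        rw [sq, Finset.sum_mul_sum, Finset.mul_sum]
        refine Finset.sum_congr rfl fun i _ => ?_
        rw [Finset.mul_sum]
        exact Finset.sum_congr rfl fun k _ => by ring
    _ = ∑ i, ∑ k, x i * x k * ∑ j, w j * A j i * A j k := by
        rw [Finset.sum_comm]
        refine Finset.sum_congr rfl fun i _ => ?_
        rw [Finset.sum_comm]
        exact Finset.sum_congr rfl fun k _ => by rw [Finset.mul_sum]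
    _ = ∑ l, x l ^ 2 := by
        simp [horth, sq]

/-- The functional decouples into one-variable functions of the coordinates. -/
lemma functional_eq {N d : ℕ} (w : Fin N → ℝ) (A : Fin N → Fin d → ℝ)
    (horth : ∀ i k : Fin d, ∑ j, w j * A j i * A j k = if i = k then 1 else 0)
    (f : Fin N → ℝ) (α : Fin d → ℝ) (hα : ∀ l, α l = ∑ j, w j * f j * A j l)
    (lam : ℝ) (μ b z : Fin d → ℝ) :
    (1 / 2) * (∑ j, w j * ((∑ l, A j l * z l) - f j) ^ 2)
          + (1 / 2) * (∑ j, w j * (∑ l, A j l * (b l * z l)) ^ 2)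
          + lam * ∑ l, μ l * |z l|
      = (1 / 2) * ∑ j, w j * f j ^ 2
        + ∑ l, ((1 + b l ^ 2) / 2 * z l ^ 2 - α l * z l + lam * μ l * |z l|) := by
  have hcross : ∑ j, w j * f j * (∑ l, A j l * z l) = ∑ l, α l * z l := by
    simp_rw [hα, Finset.mul_sum, Finset.sum_mul]
    rw [Finset.sum_comm]
    exact Finset.sum_congr rfl fun l _ => Finset.sum_congr rfl fun j _ => by ring
  have hsq : ∑ j, w j * ((∑ l, A j l * z l) - f j) ^ 2
      = ∑ l, z l ^ 2 - 2 * ∑ l, α l * z l + ∑ j, w j * f j ^ 2 := by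
    rw [← hcross, ← parseval w A horth z, Finset.mul_sum, ← Finset.sum_sub_distrib,
      ← Finset.sum_add_distrib]
    exact Finset.sum_congr rfl fun j _ => by ring
  have hsum : ∑ l, ((1 + b l ^ 2) / 2 * z l ^ 2 - α l * z l + lam * μ l * |z l|)
      = (1 / 2) * ∑ l, z l ^ 2 + (1 / 2) * ∑ l, (b l * z l) ^ 2 - ∑ l, α l * z l
        + lam * ∑ l, μ l * |z l| := by
    rw [Finset.mul_sum, Finset.mul_sum, Finset.mul_sum, ← Finset.sum_add_distrib,
      ← Finset.sum_sub_distrib, ← Finset.sum_add_distrib]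
    exact Finset.sum_congr rfl fun l _ => by ring
  rw [hsq, parseval w A horth (fun l => b l * z l), hsum]
  ring

/-- Hybrid hyperinterpolation, obtained by filtering (`h_ℓ = 1/(1+b_ℓ²)`)
and soft thresholding the hyperinterpolation coefficients, is the unique minimizer of
the ℓ₂² + ℓ₁-regularized discrete least squares functional. -/
theorem hybrid_hyperinterpolation_solution
    (N d : ℕ) (hN : 0 < N) (hd : 0 < d)
    (w : Fin N → ℝ) (hw : ∀ j, 0 < w j)
    (A : Fin N → Fin d → ℝ)
    (horth : ∀ i k : Fin d, ∑ j, w j * A j i * A j k = if i = k then 1 else 0)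
    (f : Fin N → ℝ) (α : Fin d → ℝ)
    (hα : ∀ ℓ, α ℓ = ∑ j, w j * f j * A j ℓ)
    (lam : ℝ) (hlam : 0 < lam)
    (μ : Fin d → ℝ) (hμ : ∀ ℓ, 0 < μ ℓ)
    (b : Fin d → ℝ) (hb : ∀ ℓ, 0 ≤ b ℓ)
    (h : Fin d → ℝ) (hh : ∀ ℓ, h ℓ = 1 / (1 + (b ℓ) ^ 2))
    (β : Fin d → ℝ)
    (hβ : ∀ ℓ, β ℓ = h ℓ * softThreshold (lam * μ ℓ) (α ℓ)) :
    (∀ z : Fin d → ℝ,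
      (1 / 2) * (∑ j, w j * ((∑ ℓ, A j ℓ * β ℓ) - f j) ^ 2)
          + (1 / 2) * (∑ j, w j * (∑ ℓ, A j ℓ * (b ℓ * β ℓ)) ^ 2)
          + lam * ∑ ℓ, μ ℓ * |β ℓ|
        ≤ (1 / 2) * (∑ j, w j * ((∑ ℓ, A j ℓ * z ℓ) - f j) ^ 2)
          + (1 / 2) * (∑ j, w j * (∑ ℓ, A j ℓ * (b ℓ * z ℓ)) ^ 2)
          + lam * ∑ ℓ, μ ℓ * |z ℓ|) ∧
    (∀ z : Fin d → ℝ,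
      (1 / 2) * (∑ j, w j * ((∑ ℓ, A j ℓ * z ℓ) - f j) ^ 2)
          + (1 / 2) * (∑ j, w j * (∑ ℓ, A j ℓ * (b ℓ * z ℓ)) ^ 2)
          + lam * ∑ ℓ, μ ℓ * |z ℓ|
        = (1 / 2) * (∑ j, w j * ((∑ ℓ, A j ℓ * β ℓ) - f j) ^ 2)
          + (1 / 2) * (∑ j, w j * (∑ ℓ, A j ℓ * (b ℓ * β ℓ)) ^ 2)
          + lam * ∑ ℓ, μ ℓ * |β ℓ| → z = β) := by
  have hc : ∀ l, 0 < 1 + b l ^ 2 := fun l => by positivity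
  have growth : ∀ (z : Fin d → ℝ) (l : Fin d),
      (1 + b l ^ 2) / 2 * β l ^ 2 - α l * β l + lam * μ l * |β l|
          + (1 + b l ^ 2) / 2 * (z l - β l) ^ 2
        ≤ (1 + b l ^ 2) / 2 * z l ^ 2 - α l * z l + lam * μ l * |z l| := fun z l => by
    refine scalar_growth _ _ _ _ _ (mul_pos hlam (hμ l)).le (hc l) ?_
    rw [hβ, hh, ← mul_assoc, mul_one_div_cancel (hc l).ne', one_mul]
  have hnn : ∀ (z : Fin d → ℝ) (l : Fin d), 0 ≤ (1 + b l ^ 2) / 2 * (z l - β l) ^ 2 :=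
    fun z l => by positivity
  have total : ∀ z : Fin d → ℝ,
      ∑ l, ((1 + b l ^ 2) / 2 * β l ^ 2 - α l * β l + lam * μ l * |β l|)
          + ∑ l, (1 + b l ^ 2) / 2 * (z l - β l) ^ 2
        ≤ ∑ l, ((1 + b l ^ 2) / 2 * z l ^ 2 - α l * z l + lam * μ l * |z l|) := fun z => by
    rw [← Finset.sum_add_distrib]
    exact Finset.sum_le_sum fun l _ => growth z l
  simp only [functional_eq w A horth f α hα]
  refine ⟨fun z => ?_, fun z hz => ?_⟩
  · have := Finset.sum_nonneg fun l (_ : l ∈ Finset.univ) => hnn z l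
    linarith [total z]
  · have hzero : ∑ l, (1 + b l ^ 2) / 2 * (z l - β l) ^ 2 = 0 :=
      le_antisymm (by linarith [total z]) (Finset.sum_nonneg fun l _ => hnn z l)
    funext l
    have hl := (Finset.sum_eq_zero_iff_of_nonneg fun l _ => hnn z l).mp hzero l
      (Finset.mem_univ l)
    rcases mul_eq_zero.mp hl with h0 | h0
    · linarith [hc l]
    · exact sub_eq_zero.mp (pow_eq_zero_iff two_ne_zero |>.mp h0)
end

section
/- Let N and d be positive integers, let w₁,…,w_N be strictly positive real weights with W = diag(w₁,…,w_N), let A ∈ ℝ^{N×d} satisfy AᵀWA = I_d, let f ∈ ℝ^N and α = AᵀWf. Given λ > 0, penalty parameters μ₁,…,μ_d > 0 and filter values h₁,…,h_d ∈ [0,1], let β ∈ ℝ^d be the hybrid coefficient vector β_ℓ = h_ℓ·S_{λμ_ℓ}(α_ℓ). Then the discrete inner product of the residual with the hybrid approximant equals K: (f − Aβ)ᵀ W (Aβ) = ∑_{j=1}^N w_j (f_j − (Aβ)_j)(Aβ)_j = K. -/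
/-!
Write `p = Aβ`. The residual inner product splits as `⟨f, p⟩_W - ⟨p, p⟩_W`. Expanding `p` in the
columns of `A`, the first term is `∑ β_ℓ α_ℓ` by the definition of `α`
(`weighted_inner_eq_sum_coeff`), and the second is `∑ β_ℓ²` by discrete orthonormality of those
columns (`weighted_sq_eq_sum_sq`).
-/

open Finset

/-- Discrete Parseval identity: `β ↦ Aβ` preserves the sum of squares when the columns of `A` are
orthonormal for the weights `w`. -/
theorem weighted_sq_eq_sum_sq {N d : ℕ} (w : Fin N → ℝ) (A : Fin N → Fin d → ℝ)
    (horth : ∀ i k : Fin d, ∑ j, w j * A j i * A j k = if i = k then 1 else 0)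
    (β : Fin d → ℝ) :
    ∑ j, w j * (∑ ℓ, A j ℓ * β ℓ) ^ 2 = ∑ ℓ, β ℓ ^ 2 := by
  calc ∑ j, w j * (∑ ℓ, A j ℓ * β ℓ) ^ 2
      = ∑ j, ∑ i, ∑ k, β i * β k * (w j * A j i * A j k) := by
        refine Finset.sum_congr rfl fun j _ => ?_
        rw [sq, Finset.sum_mul_sum, Finset.mul_sum]
        refine Finset.sum_congr rfl fun i _ => ?_
        rw [Finset.mul_sum]
        exact Finset.sum_congr rfl fun k _ => by ring
    _ = ∑ i, ∑ k, β i * β k * ∑ j, w j * A j i * A j k := by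
        rw [Finset.sum_comm]
        refine Finset.sum_congr rfl fun i _ => ?_
        rw [Finset.sum_comm]
        exact Finset.sum_congr rfl fun k _ => (Finset.mul_sum _ _ _).symm
    _ = ∑ ℓ, β ℓ ^ 2 := by simp [horth, sq]

theorem weighted_inner_eq_sum_coeff {N d : ℕ} (w : Fin N → ℝ) (A : Fin N → Fin d → ℝ)
    (f : Fin N → ℝ) (β : Fin d → ℝ) :
    ∑ j, w j * f j * (∑ ℓ, A j ℓ * β ℓ) = ∑ ℓ, β ℓ * ∑ j, w j * f j * A j ℓ := by
  simp_rw [Finset.mul_sum]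
  rw [Finset.sum_comm]
  exact Finset.sum_congr rfl fun i _ => Finset.sum_congr rfl fun j _ => by ring

/-- the discrete inner product of the residual `f − Aβ` with the hybrid
approximant `Aβ` equals `K`. -/
theorem residual_inner_hybrid_eq_K
    (N d : ℕ) (hN : 0 < N) (hd : 0 < d)
    (w : Fin N → ℝ) (hw : ∀ j, 0 < w j)
    (A : Fin N → Fin d → ℝ)
    (horth : ∀ i k : Fin d, ∑ j, w j * A j i * A j k = if i = k then 1 else 0)
    (f : Fin N → ℝ) (α : Fin d → ℝ)
    (hα : ∀ ℓ, α ℓ = ∑ j, w j * f j * A j ℓ)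
    (lam : ℝ) (hlam : 0 < lam)
    (μ : Fin d → ℝ) (hμ : ∀ ℓ, 0 < μ ℓ)
    (h : Fin d → ℝ) (hh : ∀ ℓ, h ℓ ∈ Set.Icc (0 : ℝ) 1)
    (β : Fin d → ℝ)
    (hβ : ∀ ℓ, β ℓ = h ℓ * softThreshold (lam * μ ℓ) (α ℓ)) :
    ∑ j, w j * (f j - ∑ ℓ, A j ℓ * β ℓ) * (∑ ℓ, A j ℓ * β ℓ)
      = ∑ ℓ, (h ℓ * softThreshold (lam * μ ℓ) (α ℓ) * α ℓ
            - (h ℓ * softThreshold (lam * μ ℓ) (α ℓ)) ^ 2) := by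
  simp_rw [← hβ]
  have split : ∑ j, w j * (f j - ∑ ℓ, A j ℓ * β ℓ) * (∑ ℓ, A j ℓ * β ℓ)
      = ∑ j, w j * f j * (∑ ℓ, A j ℓ * β ℓ) - ∑ j, w j * (∑ ℓ, A j ℓ * β ℓ) ^ 2 := by
    rw [← Finset.sum_sub_distrib]
    exact Finset.sum_congr rfl fun j _ => by ring
  rw [split, weighted_sq_eq_sum_sq w A horth, weighted_inner_eq_sum_coeff,
    Finset.sum_sub_distrib]
  simp_rw [hα]
end

section
/- Let N and d be positive integers, let w₁,…,w_N be strictly positive real weights with W = diag(w₁,…,w_N), let A ∈ ℝ^{N×d} satisfy AᵀWA = I_d, let f ∈ ℝ^N and α = AᵀWf. Given λ > 0, penalty parameters μ₁,…,μ_d > 0 and filter values h₁,…,h_d ∈ [0,1], the quantity K = ∑_{ℓ=1}^d [ h_ℓ S_{λμ_ℓ}(α_ℓ)·α_ℓ − (h_ℓ S_{λμ_ℓ}(α_ℓ))² ] satisfies K ≤ (1/2)·fᵀWf = (1/2)·∑_{j=1}^N w_j f_j². -/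
/-! Each summand has the form `x * a - x ^ 2` with `x = h ℓ * S (α ℓ)` and `a = α ℓ`, so completing
the square bounds it by `a ^ 2 / 4` whatever the filter and threshold are. Bessel's inequality
`∑ ℓ, α ℓ ^ 2 ≤ ∑ j, w j * f j ^ 2` for the discrete inner product with weights `w` then bounds the sum
by `(1 / 4) * ∑ j, w j * f j ^ 2`, a constant twice as good as required. -/

open Finset

/-- Bessel's inequality for the discrete inner product with weights `w`, obtained by expanding the
squared norm of the residual of `f` after projecting onto the columns of `A`. -/
lemma sum_sq_coeff_le_weighted_norm {N d : ℕ} (w : Fin N → ℝ) (hw : ∀ j, 0 ≤ w j)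
    (A : Fin N → Fin d → ℝ)
    (horth : ∀ i k : Fin d, ∑ j, w j * A j i * A j k = if i = k then 1 else 0)
    (f : Fin N → ℝ) (α : Fin d → ℝ) (hα : ∀ ℓ, α ℓ = ∑ j, w j * f j * A j ℓ) :
    ∑ ℓ, α ℓ ^ 2 ≤ ∑ j, w j * f j ^ 2 := by
  set p : Fin N → ℝ := fun j => ∑ ℓ, α ℓ * A j ℓ with hp
  have pair_p (g : Fin N → ℝ) :
      ∑ j, w j * g j * p j = ∑ ℓ, α ℓ * ∑ j, w j * g j * A j ℓ := by
    simp only [hp, Finset.mul_sum]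
    rw [Finset.sum_comm]
    refine Finset.sum_congr rfl fun ℓ _ => Finset.sum_congr rfl fun j _ => ?_
    ring
  have hfp : ∑ j, w j * f j * p j = ∑ ℓ, α ℓ ^ 2 := by
    rw [pair_p]
    refine Finset.sum_congr rfl fun ℓ _ => ?_
    rw [← hα, sq]
  have coeff_p (k : Fin d) : ∑ j, w j * p j * A j k = α k := by
    calc ∑ j, w j * p j * A j k = ∑ j, w j * A j k * p j :=
          Finset.sum_congr rfl fun j _ => by ring
      _ = α k := by rw [pair_p fun j => A j k]; simp [horth]
  have hpp : ∑ j, w j * p j * p j = ∑ ℓ, α ℓ ^ 2 := by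
    rw [pair_p]
    refine Finset.sum_congr rfl fun ℓ _ => ?_
    rw [coeff_p, sq]
  have hres : 0 ≤ ∑ j, w j * (f j - p j) ^ 2 :=
    Finset.sum_nonneg fun j _ => mul_nonneg (hw j) (sq_nonneg _)
  have hexp : ∑ j, w j * (f j - p j) ^ 2
      = ∑ j, w j * f j ^ 2 - 2 * ∑ j, w j * f j * p j + ∑ j, w j * p j * p j := by
    rw [Finset.mul_sum, ← Finset.sum_sub_distrib, ← Finset.sum_add_distrib]
    exact Finset.sum_congr rfl fun j _ => by ring
  linarith

/-- `K ≤ (1/2)·fᵀWf`. -/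
theorem K_le_half_weighted_norm
    (N d : ℕ) (hN : 0 < N) (hd : 0 < d)
    (w : Fin N → ℝ) (hw : ∀ j, 0 < w j)
    (A : Fin N → Fin d → ℝ)
    (horth : ∀ i k : Fin d, ∑ j, w j * A j i * A j k = if i = k then 1 else 0)
    (f : Fin N → ℝ) (α : Fin d → ℝ)
    (hα : ∀ ℓ, α ℓ = ∑ j, w j * f j * A j ℓ)
    (lam : ℝ) (hlam : 0 < lam)
    (μ : Fin d → ℝ) (hμ : ∀ ℓ, 0 < μ ℓ)
    (h : Fin d → ℝ) (hh : ∀ ℓ, h ℓ ∈ Set.Icc (0 : ℝ) 1) :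
    ∑ ℓ, (h ℓ * softThreshold (lam * μ ℓ) (α ℓ) * α ℓ
            - (h ℓ * softThreshold (lam * μ ℓ) (α ℓ)) ^ 2)
      ≤ (1 / 2) * ∑ j, w j * f j ^ 2 := by
  have hbessel := sum_sq_coeff_le_weighted_norm w (fun j => (hw j).le) A horth f α hα
  have hterm : ∑ ℓ, (h ℓ * softThreshold (lam * μ ℓ) (α ℓ) * α ℓ
            - (h ℓ * softThreshold (lam * μ ℓ) (α ℓ)) ^ 2) ≤ ∑ ℓ, (1 / 4) * α ℓ ^ 2 :=
    Finset.sum_le_sum fun ℓ _ => by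
      linarith [sq_nonneg (h ℓ * softThreshold (lam * μ ℓ) (α ℓ) - α ℓ / 2)]
  rw [← Finset.mul_sum] at hterm
  have hnonneg : 0 ≤ ∑ ℓ, α ℓ ^ 2 := Finset.sum_nonneg fun ℓ _ => sq_nonneg _
  linarith
end

section
/- Under the continuous quadrature setup, for every bounded measurable g : Ω → ℝ, the hyperinterpolant ℒg = ∑_{ℓ=1}^d α_ℓ(g) Φ_ℓ satisfies the stability estimate ‖ℒg‖₂ ≤ V^{1/2}·‖g‖_∞. -/
open Finset MeasureTheory

/-!
The coefficients `α_ℓ` are the Fourier coefficients of `g` with respect to the discrete inner product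
`⟨u, v⟩_N = ∑ j, w j * u (x j) * v (x j)`, for which the `Φ ℓ` are orthonormal, so Bessel's inequality
(`sum_sq_le_of_discrete_orthonormal`) gives `∑ α_ℓ² ≤ ∑ w_j g(x_j)²`, and the right-hand side is at
most `V ‖g‖_∞²` because the weights are positive with sum `V`. Orthonormality in `L²(ω)`
(`integral_sq_of_orthonormal`) identifies `∑ α_ℓ²` with `‖ℒg‖₂²`.
-/

lemma sq_sum_eq_double_sum {d : ℕ} (a p : Fin d → ℝ) :
    (∑ ℓ, a ℓ * p ℓ) ^ 2 = ∑ i, ∑ k, a i * a k * (p i * p k) := by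
  rw [sq, Finset.sum_mul_sum]
  exact Finset.sum_congr rfl fun i _ => Finset.sum_congr rfl fun k _ => by ring

/-- Parseval's identity for a finite combination of functions orthonormal in `L²(ω)`. -/
lemma integral_sq_of_orthonormal {Ω : Type*} [MeasurableSpace Ω] (ω : Measure Ω)
    {d : ℕ} (Φ : Fin d → Ω → ℝ) (hint : ∀ i k, Integrable (fun y => Φ i y * Φ k y) ω)
    (horth : ∀ i k : Fin d, ∫ x, Φ i x * Φ k x ∂ω = if i = k then 1 else 0)
    (a : Fin d → ℝ) :
    ∫ y, (∑ ℓ, a ℓ * Φ ℓ y) ^ 2 ∂ω = ∑ ℓ, a ℓ ^ 2 := by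
  simp_rw [fun y => sq_sum_eq_double_sum a (fun ℓ => Φ ℓ y)]
  rw [integral_finsetSum _ fun i _ => integrable_finsetSum _ fun k _ => (hint i k).const_mul _]
  refine Finset.sum_congr rfl fun i _ => ?_
  rw [integral_finsetSum _ fun k _ => (hint i k).const_mul _]
  simp_rw [integral_const_mul, horth]
  simp [sq]

/-- Bessel's inequality for the discrete inner product with nonnegative weights `w`;
`P ℓ j` stands for `Φ_ℓ(x_j)` and `u j` for `g(x_j)`. -/
lemma sum_sq_le_of_discrete_orthonormal {d N : ℕ} (w : Fin N → ℝ) (hw : ∀ j, 0 ≤ w j)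
    (P : Fin d → Fin N → ℝ)
    (horth : ∀ i k : Fin d, ∑ j, w j * P i j * P k j = if i = k then 1 else 0)
    (u : Fin N → ℝ) :
    ∑ ℓ, (∑ j, w j * u j * P ℓ j) ^ 2 ≤ ∑ j, w j * u j ^ 2 := by
  obtain ⟨a, ha⟩ : ∃ a : Fin d → ℝ, ∀ ℓ, a ℓ = ∑ j, w j * u j * P ℓ j := ⟨_, fun _ => rfl⟩
  simp_rw [← ha]
  have cross : ∑ j, w j * u j * (∑ ℓ, a ℓ * P ℓ j) = ∑ ℓ, a ℓ ^ 2 := by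
    simp_rw [Finset.mul_sum]
    rw [Finset.sum_comm]
    refine Finset.sum_congr rfl fun ℓ _ => ?_
    rw [sq]
    nth_rewrite 3 [ha]
    rw [Finset.mul_sum]
    exact Finset.sum_congr rfl fun j _ => by ring
  have square : ∑ j, w j * (∑ ℓ, a ℓ * P ℓ j) ^ 2 = ∑ ℓ, a ℓ ^ 2 := by
    simp_rw [fun j => sq_sum_eq_double_sum a (fun ℓ => P ℓ j), Finset.mul_sum]
    rw [Finset.sum_comm]
    refine Finset.sum_congr rfl fun i _ => ?_
    rw [Finset.sum_comm]
    have h : ∀ k, ∑ j, w j * (a i * a k * (P i j * P k j))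
        = a i * a k * (if i = k then 1 else 0) := fun k => by
      rw [← horth, Finset.mul_sum]
      exact Finset.sum_congr rfl fun j _ => by ring
    simp_rw [h]
    simp [sq]
  have residual : 0 ≤ ∑ j, w j * (u j - ∑ ℓ, a ℓ * P ℓ j) ^ 2 :=
    Finset.sum_nonneg fun j _ => mul_nonneg (hw j) (sq_nonneg _)
  have expand : ∑ j, w j * (u j - ∑ ℓ, a ℓ * P ℓ j) ^ 2
      = ∑ j, w j * u j ^ 2 - 2 * ∑ j, w j * u j * (∑ ℓ, a ℓ * P ℓ j)
        + ∑ j, w j * (∑ ℓ, a ℓ * P ℓ j) ^ 2 := by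
    rw [Finset.mul_sum, ← Finset.sum_sub_distrib, ← Finset.sum_add_distrib]
    exact Finset.sum_congr rfl fun j _ => by ring
  linarith

/-- stability of hyperinterpolation, `‖ℒg‖₂ ≤ V^{1/2}·‖g‖_∞`. -/
theorem hyperinterpolation_stability
    {Ω : Type*} [MeasurableSpace Ω] [Nonempty Ω]
    (ω : Measure Ω) [IsFiniteMeasure ω]
    (V : ℝ) (hV : V = (ω Set.univ).toReal)
    (d N : ℕ) (hd : 0 < d) (hN : 0 < N)
    (Φ : Fin d → Ω → ℝ)
    (hΦmeas : ∀ ℓ, Measurable (Φ ℓ))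
    (hΦbdd : ∀ ℓ, ∃ C : ℝ, ∀ x, |Φ ℓ x| ≤ C)
    (horth : ∀ i k : Fin d, ∫ x, Φ i x * Φ k x ∂ω = if i = k then 1 else 0)
    (x : Fin N → Ω) (w : Fin N → ℝ) (hw : ∀ j, 0 < w j)
    (hwV : ∑ j, w j = V)
    (hdorth : ∀ i k : Fin d,
      ∑ j, w j * Φ i (x j) * Φ k (x j) = if i = k then 1 else 0)
    (g : Ω → ℝ) (hg : Measurable g) (hgb : ∃ C : ℝ, ∀ y, |g y| ≤ C) :
    Real.sqrt (∫ y, (∑ ℓ, (∑ j, w j * g (x j) * Φ ℓ (x j)) * Φ ℓ y) ^ 2 ∂ω)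
      ≤ Real.sqrt V * (⨆ y, |g y|) := by
  have hint : ∀ i k, Integrable (fun y => Φ i y * Φ k y) ω := fun i k => by
    obtain ⟨A, hA⟩ := hΦbdd i
    obtain ⟨B, hB⟩ := hΦbdd k
    refine Integrable.of_bound ((hΦmeas i).mul (hΦmeas k)).aestronglyMeasurable (A * B)
      (Filter.Eventually.of_forall fun y => ?_)
    rw [Real.norm_eq_abs, abs_mul]
    exact mul_le_mul (hA y) (hB y) (abs_nonneg _) ((abs_nonneg _).trans (hA y))
  have hbdd : BddAbove (Set.range fun y => |g y|) := by
    obtain ⟨C, hC⟩ := hgb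
    exact ⟨C, by rintro _ ⟨y, rfl⟩; exact hC y⟩
  have hM : ∀ y, |g y| ≤ ⨆ y, |g y| := fun y => le_ciSup hbdd y
  have hM0 : 0 ≤ ⨆ y, |g y| := Real.iSup_nonneg fun y => abs_nonneg _
  have hV0 : 0 ≤ V := hV ▸ ENNReal.toReal_nonneg
  rw [integral_sq_of_orthonormal ω Φ hint horth]
  refine Real.sqrt_le_iff.2 ⟨mul_nonneg (Real.sqrt_nonneg _) hM0, ?_⟩
  rw [mul_pow, Real.sq_sqrt hV0, ← hwV, Finset.sum_mul]
  refine (sum_sq_le_of_discrete_orthonormal w (fun j => (hw j).le) (fun ℓ j => Φ ℓ (x j)) hdorth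
    (fun j => g (x j))).trans (Finset.sum_le_sum fun j _ => ?_)
  refine mul_le_mul_of_nonneg_left ?_ (hw j).le
  rw [← sq_abs]
  exact pow_le_pow_left₀ (abs_nonneg _) (hM _) 2
end

section
/- Under the continuous quadrature setup, let λ > 0, penalty parameters μ₁,…,μ_d > 0 and filter values h₁,…,h_d ∈ [0,1] be given. For every bounded measurable f : Ω → ℝ, the hybrid hyperinterpolant Hf = ∑_{ℓ=1}^d h_ℓ S_{λμ_ℓ}(α_ℓ(f)) Φ_ℓ satisfies ‖Hf‖₂² ≤ V·‖f‖_∞² − 2K(f), where K(f) = ∑_{ℓ=1}^d [ h_ℓ S_{λμ_ℓ}(α_ℓ(f))·α_ℓ(f) − (h_ℓ S_{λμ_ℓ}(α_ℓ(f)))² ] ≥ 0; in particular ‖Hf‖₂ ≤ V^{1/2}‖f‖_∞, with strict inequality whenever K(f) > 0. -/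
/-!
Write `c ℓ = h ℓ * S (α ℓ)` for the coefficients of `Hf`. Orthonormality in `L²(ω)` gives
`‖Hf‖₂² = ∑ c ℓ ^ 2`. The discrete orthonormality gives
`∑ w j (f (x j) - Hf (x j))² = ∑ w j f (x j)² - 2 ∑ c ℓ α ℓ + ∑ c ℓ ^ 2`, and the left side is
nonnegative, so `∑ c ℓ ^ 2 ≤ ∑ w j f (x j)² - 2 K ≤ V ‖f‖_∞² - 2 K`. Finally `K ≥ 0` termwise,
because soft thresholding keeps the sign and does not increase the absolute value, which gives
`(h S(a))² ≤ h S(a) a` for `h ∈ [0, 1]`.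
-/

open Finset MeasureTheory

/-- Soft thresholding shrinks towards zero without changing sign, even after damping by `t`. -/
lemma sq_mul_softThreshold_le {k t : ℝ} (hk : 0 ≤ k) (ht : t ∈ Set.Icc (0 : ℝ) 1) (a : ℝ) :
    (t * softThreshold k a) ^ 2 ≤ t * softThreshold k a * a := by
  obtain ⟨h0, h1⟩ := ht
  have key : softThreshold k a ^ 2 ≤ softThreshold k a * a := by
    unfold softThreshold
    rcases max_cases 0 (a - k) with ⟨e1, _⟩ | ⟨e1, _⟩ <;>
      rcases min_cases 0 (a + k) with ⟨e2, _⟩ | ⟨e2, _⟩ <;> rw [e1, e2] <;> nlinarith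
  calc (t * softThreshold k a) ^ 2 = t * (t * softThreshold k a ^ 2) := by ring
    _ ≤ t * (1 * softThreshold k a ^ 2) := by gcongr
    _ ≤ t * (softThreshold k a * a) := by rw [one_mul]; gcongr
    _ = t * softThreshold k a * a := by ring

/-- Parseval's identity for a finite orthonormal family of bounded functions. -/
lemma integral_sq_sum_of_orthonormal {Ω : Type*} [MeasurableSpace Ω] (ω : Measure Ω)
    [IsFiniteMeasure ω] {d : ℕ} (Φ : Fin d → Ω → ℝ) (hΦmeas : ∀ ℓ, Measurable (Φ ℓ))
    (hΦbdd : ∀ ℓ, ∃ C : ℝ, ∀ x, |Φ ℓ x| ≤ C)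
    (horth : ∀ i k : Fin d, ∫ x, Φ i x * Φ k x ∂ω = if i = k then 1 else 0) (c : Fin d → ℝ) :
    ∫ y, (∑ ℓ, c ℓ * Φ ℓ y) ^ 2 ∂ω = ∑ ℓ, c ℓ ^ 2 := by
  have hint : ∀ i k, Integrable (fun y => c i * c k * (Φ i y * Φ k y)) ω := by
    intro i k
    obtain ⟨A, hA⟩ := hΦbdd i
    obtain ⟨B, hB⟩ := hΦbdd k
    refine (Integrable.of_bound ((hΦmeas i).mul (hΦmeas k)).aestronglyMeasurable (A * B)
      (Filter.Eventually.of_forall fun y => ?_)).const_mul _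
    rw [Real.norm_eq_abs, Pi.mul_apply, abs_mul]
    exact mul_le_mul (hA y) (hB y) (abs_nonneg _) ((abs_nonneg _).trans (hA y))
  have hexp : ∀ y, (∑ ℓ, c ℓ * Φ ℓ y) ^ 2 = ∑ i, ∑ k, c i * c k * (Φ i y * Φ k y) := by
    intro y
    rw [sq, Finset.sum_mul_sum]
    exact Finset.sum_congr rfl fun i _ => Finset.sum_congr rfl fun k _ => by ring
  simp_rw [hexp]
  rw [integral_finsetSum _ fun i _ => integrable_finsetSum _ fun k _ => hint i k]
  refine Finset.sum_congr rfl fun i _ => ?_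
  rw [integral_finsetSum _ fun k _ => hint i k]
  simp_rw [integral_const_mul, horth]
  simp [sq]

/-- The discrete squared distance from the data `g` to `∑ c ℓ • P ℓ`, expanded by discrete
orthonormality. -/
lemma discrete_sq_dist {d N : ℕ} (w g : Fin N → ℝ) (P : Fin d → Fin N → ℝ)
    (hP : ∀ i k : Fin d, ∑ j, w j * P i j * P k j = if i = k then 1 else 0) (c : Fin d → ℝ) :
    ∑ j, w j * (g j - ∑ ℓ, c ℓ * P ℓ j) ^ 2 =
      ∑ j, w j * g j ^ 2 - 2 * ∑ ℓ, c ℓ * ∑ j, w j * g j * P ℓ j + ∑ ℓ, c ℓ ^ 2 := by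
  have hcross : ∑ ℓ, c ℓ * ∑ j, w j * g j * P ℓ j = ∑ j, w j * g j * ∑ ℓ, c ℓ * P ℓ j := by
    simp_rw [Finset.mul_sum]
    rw [Finset.sum_comm]
    exact Finset.sum_congr rfl fun j _ => Finset.sum_congr rfl fun ℓ _ => by ring
  have hquad : ∑ ℓ, c ℓ ^ 2 = ∑ j, w j * (∑ ℓ, c ℓ * P ℓ j) ^ 2 := by
    calc ∑ ℓ, c ℓ ^ 2 = ∑ i, ∑ k, c i * c k * ∑ j, w j * P i j * P k j := by
          simp_rw [hP]; simp [sq]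
      _ = ∑ i, ∑ j, ∑ k, c i * c k * (w j * P i j * P k j) := by
          simp_rw [Finset.mul_sum]
          exact Finset.sum_congr rfl fun i _ => Finset.sum_comm
      _ = ∑ j, ∑ i, ∑ k, c i * c k * (w j * P i j * P k j) := Finset.sum_comm
      _ = ∑ j, w j * (∑ ℓ, c ℓ * P ℓ j) ^ 2 := by
          refine Finset.sum_congr rfl fun j _ => ?_
          rw [sq, Finset.sum_mul_sum]
          simp_rw [Finset.mul_sum]
          exact Finset.sum_congr rfl fun i _ => Finset.sum_congr rfl fun k _ => by ring
  rw [hcross, hquad, Finset.mul_sum, ← Finset.sum_sub_distrib, ← Finset.sum_add_distrib]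
  exact Finset.sum_congr rfl fun j _ => by ring

/-- stability of hybrid hyperinterpolation:
`‖Hf‖₂² ≤ V·‖f‖_∞² − 2K(f)` with `K(f) ≥ 0`; in particular `‖Hf‖₂ ≤ V^{1/2}‖f‖_∞`,
strictly when `K(f) > 0`. -/
theorem hybrid_hyperinterpolation_stability
    {Ω : Type*} [MeasurableSpace Ω] [Nonempty Ω]
    (ω : Measure Ω) [IsFiniteMeasure ω]
    (V : ℝ) (hV : V = (ω Set.univ).toReal)
    (d N : ℕ) (hd : 0 < d) (hN : 0 < N)
    (Φ : Fin d → Ω → ℝ)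
    (hΦmeas : ∀ ℓ, Measurable (Φ ℓ))
    (hΦbdd : ∀ ℓ, ∃ C : ℝ, ∀ x, |Φ ℓ x| ≤ C)
    (horth : ∀ i k : Fin d, ∫ x, Φ i x * Φ k x ∂ω = if i = k then 1 else 0)
    (x : Fin N → Ω) (w : Fin N → ℝ) (hw : ∀ j, 0 < w j)
    (hwV : ∑ j, w j = V)
    (hdorth : ∀ i k : Fin d,
      ∑ j, w j * Φ i (x j) * Φ k (x j) = if i = k then 1 else 0)
    (lam : ℝ) (hlam : 0 < lam)
    (μ : Fin d → ℝ) (hμ : ∀ ℓ, 0 < μ ℓ)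
    (h : Fin d → ℝ) (hh : ∀ ℓ, h ℓ ∈ Set.Icc (0 : ℝ) 1)
    (f : Ω → ℝ) (hf : Measurable f) (hfb : ∃ C : ℝ, ∀ y, |f y| ≤ C)
    (α : Fin d → ℝ) (hα : ∀ ℓ, α ℓ = ∑ j, w j * f (x j) * Φ ℓ (x j))
    (K : ℝ)
    (hK : K = ∑ ℓ, (h ℓ * softThreshold (lam * μ ℓ) (α ℓ) * α ℓ
            - (h ℓ * softThreshold (lam * μ ℓ) (α ℓ)) ^ 2)) :
    0 ≤ K ∧
    (∫ y, (∑ ℓ, h ℓ * softThreshold (lam * μ ℓ) (α ℓ) * Φ ℓ y) ^ 2 ∂ω)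
      ≤ V * (⨆ y, |f y|) ^ 2 - 2 * K ∧
    Real.sqrt (∫ y, (∑ ℓ, h ℓ * softThreshold (lam * μ ℓ) (α ℓ) * Φ ℓ y) ^ 2 ∂ω)
      ≤ Real.sqrt V * (⨆ y, |f y|) ∧
    (0 < K →
      Real.sqrt (∫ y, (∑ ℓ, h ℓ * softThreshold (lam * μ ℓ) (α ℓ) * Φ ℓ y) ^ 2 ∂ω)
        < Real.sqrt V * (⨆ y, |f y|)) := by
  have hK0 : 0 ≤ K := by
    rw [hK]
    exact Finset.sum_nonneg fun ℓ _ => sub_nonneg.2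
      (sq_mul_softThreshold_le (mul_pos hlam (hμ ℓ)).le (hh ℓ) (α ℓ))
  have hbdd : BddAbove (Set.range fun y => |f y|) := by
    obtain ⟨C, hC⟩ := hfb
    exact ⟨C, by rintro _ ⟨y, rfl⟩; exact hC y⟩
  have hfle : ∀ y, |f y| ≤ ⨆ y, |f y| := fun y => le_ciSup hbdd y
  have hF0 : 0 ≤ ⨆ y, |f y| := Real.iSup_nonneg fun y => abs_nonneg _
  have hV0 : 0 ≤ V := hV ▸ ENNReal.toReal_nonneg
  rw [integral_sq_sum_of_orthonormal ω Φ hΦmeas hΦbdd horth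
    (fun ℓ => h ℓ * softThreshold (lam * μ ℓ) (α ℓ))]
  have hdist := discrete_sq_dist w (fun j => f (x j)) (fun ℓ j => Φ ℓ (x j)) hdorth
    (fun ℓ => h ℓ * softThreshold (lam * μ ℓ) (α ℓ))
  simp only [← hα] at hdist
  have hnonneg : 0 ≤ ∑ j, w j * (f (x j) -
      ∑ ℓ, h ℓ * softThreshold (lam * μ ℓ) (α ℓ) * Φ ℓ (x j)) ^ 2 :=
    Finset.sum_nonneg fun j _ => mul_nonneg (hw j).le (sq_nonneg _)
  have hdata : ∑ j, w j * f (x j) ^ 2 ≤ V * (⨆ y, |f y|) ^ 2 := by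
    rw [← hwV, Finset.sum_mul]
    refine Finset.sum_le_sum fun j _ => mul_le_mul_of_nonneg_left ?_ (hw j).le
    exact sq_le_sq' (abs_le.1 (hfle _)).1 (abs_le.1 (hfle _)).2
  rw [Finset.sum_sub_distrib] at hK
  have hmain : ∑ ℓ, (h ℓ * softThreshold (lam * μ ℓ) (α ℓ)) ^ 2
      ≤ V * (⨆ y, |f y|) ^ 2 - 2 * K := by linarith
  have hsqrt : Real.sqrt V * (⨆ y, |f y|) = Real.sqrt (V * (⨆ y, |f y|) ^ 2) := by
    rw [Real.sqrt_mul hV0, Real.sqrt_sq hF0]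
  refine ⟨hK0, hmain, ?_, fun hKpos => ?_⟩
  · rw [hsqrt]
    exact Real.sqrt_le_sqrt (by linarith)
  · rw [hsqrt]
    exact Real.sqrt_lt_sqrt (Finset.sum_nonneg fun ℓ _ => sq_nonneg _) (by linarith)
end

section
/- Under the continuous quadrature setup, let λ > 0, penalty parameters μ₁,…,μ_d > 0 and filter values h₁,…,h_d ∈ [0,1] be given. For every bounded measurable f : Ω → ℝ, the hybrid hyperinterpolant Hf = ∑_{ℓ=1}^d h_ℓ S_{λμ_ℓ}(α_ℓ(f)) Φ_ℓ and the hyperinterpolant ℒf = ∑_{ℓ=1}^d α_ℓ(f) Φ_ℓ satisfy ‖Hf − f‖₂ ≤ ‖Hf − ℒf‖₂ + 2·V^{1/2}·E(f), where E(f) = inf{ ‖f − p‖_∞ : p ∈ span{Φ₁,…,Φ_d} }. -/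
/-!
The estimate is two triangle inequalities in `L²(ω)` around an arbitrary `p = ∑ c_ℓ Φ_ℓ`:
`‖Hf − f‖₂ ≤ ‖Hf − ℒf‖₂ + ‖ℒf − p‖₂ + ‖p − f‖₂`. The last term is at most `V^{1/2} ‖f − p‖_∞`
because `ω` has total mass `V`. For the middle one, discrete orthonormality gives `ℒp = p`, so
`ℒf − p = ℒ(f − p)`; by orthonormality in `L²(ω)` its squared norm is the sum of the squares of the
coefficients of `f − p`, which Bessel's inequality for the discrete inner product
`∑ w_j u(x_j) v(x_j)` bounds by `∑ w_j (f − p)(x_j)² ≤ V ‖f − p‖_∞²`. Taking the infimum over `c`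
finishes the proof.
-/

open Finset MeasureTheory

lemma sqrt_integral_sq_eq {Ω : Type*} [MeasurableSpace Ω] {ω : Measure Ω} {u : Ω → ℝ}
    (hu : MemLp u 2 ω) : Real.sqrt (∫ y, u y ^ 2 ∂ω) = (eLpNorm u 2 ω).toReal := by
  rw [hu.eLpNorm_eq_integral_rpow_norm (by simp) (by simp),
    ENNReal.toReal_ofReal (by positivity), Real.sqrt_eq_rpow]
  simp

/-- The triangle inequality in `L²(ω)` through an intermediate function `v`. -/
lemma sqrt_integral_sq_sub_le {Ω : Type*} [MeasurableSpace Ω] {ω : Measure Ω} {u v t : Ω → ℝ}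
    (hu : MemLp u 2 ω) (hv : MemLp v 2 ω) (ht : MemLp t 2 ω) :
    Real.sqrt (∫ y, (u y - t y) ^ 2 ∂ω)
      ≤ Real.sqrt (∫ y, (u y - v y) ^ 2 ∂ω) + Real.sqrt (∫ y, (v y - t y) ^ 2 ∂ω) := by
  have e1 := sqrt_integral_sq_eq (hu.sub ht)
  have e2 := sqrt_integral_sq_eq (hu.sub hv)
  have e3 := sqrt_integral_sq_eq (hv.sub ht)
  simp only [Pi.sub_apply] at e1 e2 e3
  rw [e1, e2, e3, ← ENNReal.toReal_add (hu.sub hv).eLpNorm_ne_top (hv.sub ht).eLpNorm_ne_top]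
  refine ENNReal.toReal_mono
    (ENNReal.add_ne_top.2 ⟨(hu.sub hv).eLpNorm_ne_top, (hv.sub ht).eLpNorm_ne_top⟩) ?_
  have key := eLpNorm_add_le (hu.sub hv).1 (hv.sub ht).1 (p := 2) (by norm_num)
  rwa [sub_add_sub_cancel] at key

lemma memLp_sum_mul {Ω : Type*} [MeasurableSpace Ω] {ω : Measure Ω} {d : ℕ}
    {Φ : Fin d → Ω → ℝ} (hΦ : ∀ ℓ, MemLp (Φ ℓ) 2 ω) (b : Fin d → ℝ) :
    MemLp (fun y => ∑ ℓ, b ℓ * Φ ℓ y) 2 ω :=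
  memLp_finsetSum _ fun ℓ _ => (hΦ ℓ).const_mul (b ℓ)

/-- Parseval's identity for a finite orthonormal family in `L²(ω)`. -/
lemma integral_sum_mul_sq {Ω : Type*} [MeasurableSpace Ω] {ω : Measure Ω} {d : ℕ}
    {Φ : Fin d → Ω → ℝ} (hΦ : ∀ ℓ, MemLp (Φ ℓ) 2 ω)
    (horth : ∀ i k : Fin d, ∫ x, Φ i x * Φ k x ∂ω = if i = k then 1 else 0) (b : Fin d → ℝ) :
    ∫ y, (∑ ℓ, b ℓ * Φ ℓ y) ^ 2 ∂ω = ∑ ℓ, b ℓ ^ 2 := by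
  have e : ∀ y, (∑ ℓ, b ℓ * Φ ℓ y) ^ 2 = ∑ i, ∑ k, (b i * b k) * (Φ i y * Φ k y) := by
    intro y
    rw [sq, Finset.sum_mul_sum]
    exact Finset.sum_congr rfl fun i _ => Finset.sum_congr rfl fun k _ => by ring
  have hint : ∀ i k, Integrable (fun y => (b i * b k) * (Φ i y * Φ k y)) ω := fun i k =>
    ((hΦ i).integrable_mul (hΦ k)).const_mul _
  simp_rw [e]
  rw [integral_finsetSum _ fun i _ => integrable_finsetSum _ fun k _ => hint i k]
  refine Finset.sum_congr rfl fun i _ => ?_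
  rw [integral_finsetSum _ fun k _ => hint i k]
  simp_rw [integral_const_mul, horth]
  simp [sq]

/-- Bessel's inequality for the discrete inner product with nodes `j` and weights `w j`;
`P ℓ j` and `g j` are the values of the `ℓ`-th orthonormal function and of `g` at node `j`. -/
lemma discrete_bessel {d N : ℕ} (P : Fin d → Fin N → ℝ) (w : Fin N → ℝ) (hw : ∀ j, 0 < w j)
    (hdorth : ∀ i k : Fin d, ∑ j, w j * P i j * P k j = if i = k then 1 else 0)
    (g : Fin N → ℝ) :
    ∑ ℓ, (∑ j, w j * g j * P ℓ j) ^ 2 ≤ ∑ j, w j * g j ^ 2 := by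
  set b : Fin d → ℝ := fun ℓ => ∑ j, w j * g j * P ℓ j with hb
  have h0 : 0 ≤ ∑ j, w j * (g j - ∑ ℓ, b ℓ * P ℓ j) ^ 2 :=
    Finset.sum_nonneg fun j _ => mul_nonneg (hw j).le (sq_nonneg _)
  have h1 : ∑ j, w j * g j * ∑ ℓ, b ℓ * P ℓ j = ∑ ℓ, b ℓ ^ 2 := by
    simp_rw [Finset.mul_sum]
    rw [Finset.sum_comm]
    refine Finset.sum_congr rfl fun ℓ _ => ?_
    rw [sq]
    nth_rewrite 3 [hb]
    simp only [Finset.mul_sum]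
    exact Finset.sum_congr rfl fun j _ => by ring
  have h2 : ∑ j, w j * (∑ ℓ, b ℓ * P ℓ j) ^ 2 = ∑ ℓ, b ℓ ^ 2 := by
    have e : ∀ j, w j * (∑ ℓ, b ℓ * P ℓ j) ^ 2
        = ∑ i, ∑ k, (b i * b k) * (w j * P i j * P k j) := by
      intro j
      rw [sq, Finset.sum_mul_sum, Finset.mul_sum]
      refine Finset.sum_congr rfl fun i _ => ?_
      rw [Finset.mul_sum]
      exact Finset.sum_congr rfl fun k _ => by ring
    simp_rw [e]
    rw [Finset.sum_comm]
    refine Finset.sum_congr rfl fun i _ => ?_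
    rw [Finset.sum_comm]
    simp_rw [← Finset.mul_sum, hdorth]
    simp [sq]
  have h3 : ∑ j, w j * (g j - ∑ ℓ, b ℓ * P ℓ j) ^ 2
      = ∑ j, w j * g j ^ 2 - 2 * ∑ j, w j * g j * ∑ ℓ, b ℓ * P ℓ j
        + ∑ j, w j * (∑ ℓ, b ℓ * P ℓ j) ^ 2 := by
    rw [Finset.mul_sum, ← Finset.sum_sub_distrib, ← Finset.sum_add_distrib]
    exact Finset.sum_congr rfl fun j _ => by ring
  change ∑ ℓ, b ℓ ^ 2 ≤ _
  linarith

/-- error estimate for hybrid hyperinterpolation (noise-free):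
`‖Hf − f‖₂ ≤ ‖Hf − ℒf‖₂ + 2·V^{1/2}·E(f)`. -/
theorem hybrid_hyperinterpolation_error
    {Ω : Type*} [MeasurableSpace Ω] [Nonempty Ω]
    (ω : Measure Ω) [IsFiniteMeasure ω]
    (V : ℝ) (hV : V = (ω Set.univ).toReal)
    (d N : ℕ) (hd : 0 < d) (hN : 0 < N)
    (Φ : Fin d → Ω → ℝ)
    (hΦmeas : ∀ ℓ, Measurable (Φ ℓ))
    (hΦbdd : ∀ ℓ, ∃ C : ℝ, ∀ x, |Φ ℓ x| ≤ C)
    (horth : ∀ i k : Fin d, ∫ x, Φ i x * Φ k x ∂ω = if i = k then 1 else 0)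
    (x : Fin N → Ω) (w : Fin N → ℝ) (hw : ∀ j, 0 < w j)
    (hwV : ∑ j, w j = V)
    (hdorth : ∀ i k : Fin d,
      ∑ j, w j * Φ i (x j) * Φ k (x j) = if i = k then 1 else 0)
    (lam : ℝ) (hlam : 0 < lam)
    (μ : Fin d → ℝ) (hμ : ∀ ℓ, 0 < μ ℓ)
    (h : Fin d → ℝ) (hh : ∀ ℓ, h ℓ ∈ Set.Icc (0 : ℝ) 1)
    (f : Ω → ℝ) (hf : Measurable f) (hfb : ∃ C : ℝ, ∀ y, |f y| ≤ C)
    (α : Fin d → ℝ) (hα : ∀ ℓ, α ℓ = ∑ j, w j * f (x j) * Φ ℓ (x j)) :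
    Real.sqrt (∫ y,
        ((∑ ℓ, h ℓ * softThreshold (lam * μ ℓ) (α ℓ) * Φ ℓ y) - f y) ^ 2 ∂ω)
      ≤ Real.sqrt (∫ y,
          ((∑ ℓ, h ℓ * softThreshold (lam * μ ℓ) (α ℓ) * Φ ℓ y)
            - ∑ ℓ, α ℓ * Φ ℓ y) ^ 2 ∂ω)
        + 2 * Real.sqrt V *
          sInf {r : ℝ | ∃ c : Fin d → ℝ, r = ⨆ y, |f y - ∑ ℓ, c ℓ * Φ ℓ y|} := by
  have hΦ2 : ∀ ℓ, MemLp (Φ ℓ) 2 ω := fun ℓ => by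
    obtain ⟨C, hC⟩ := hΦbdd ℓ
    exact MemLp.of_bound (hΦmeas ℓ).aestronglyMeasurable C (ae_of_all _ hC)
  obtain ⟨Cf, hCf⟩ := hfb
  have hf2 : MemLp f 2 ω := MemLp.of_bound hf.aestronglyMeasurable Cf (ae_of_all _ hCf)
  have hVpos : 0 < V := by
    rw [← hwV]
    exact Finset.sum_pos (fun j _ => hw j) ⟨⟨0, hN⟩, Finset.mem_univ _⟩
  have hK : 0 < 2 * Real.sqrt V := by positivity
  have hbound : ∀ {a r : ℝ}, 0 ≤ r → a ≤ V * r ^ 2 → Real.sqrt a ≤ Real.sqrt V * r := by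
    intro a r hr ha
    rw [← Real.sqrt_sq hr, ← Real.sqrt_mul hVpos.le]
    exact Real.sqrt_le_sqrt ha
  rw [← sub_le_iff_le_add', ← div_le_iff₀' hK]
  refine le_csInf ⟨_, fun _ => 0, rfl⟩ ?_
  rintro r ⟨c, hr⟩
  rw [div_le_iff₀' hK, sub_le_iff_le_add']
  -- The real-valued supremum is a genuine one only because `f − p` is bounded.
  have hbdd : BddAbove (Set.range fun y => |f y - ∑ ℓ, c ℓ * Φ ℓ y|) := by
    choose C hC using hΦbdd
    refine ⟨Cf + ∑ ℓ, |c ℓ| * C ℓ, ?_⟩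
    rintro _ ⟨y, rfl⟩
    refine (abs_sub _ _).trans (add_le_add (hCf y) ?_)
    refine (Finset.abs_sum_le_sum_abs _ _).trans (Finset.sum_le_sum fun ℓ _ => ?_)
    rw [abs_mul]
    exact mul_le_mul_of_nonneg_left (hC ℓ y) (abs_nonneg _)
  have hle : ∀ y, |f y - ∑ ℓ, c ℓ * Φ ℓ y| ≤ r := fun y => hr ▸ le_ciSup hbdd y
  have hr0 : 0 ≤ r := (abs_nonneg _).trans (hle (Classical.arbitrary Ω))
  have hsq : ∀ y, (f y - ∑ ℓ, c ℓ * Φ ℓ y) ^ 2 ≤ r ^ 2 := fun y => sq_le_sq'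
    (abs_le.1 (hle y)).1 (abs_le.1 (hle y)).2
  have hp2 := memLp_sum_mul hΦ2 c
  have hL2 := memLp_sum_mul hΦ2 α
  have hH2 := memLp_sum_mul hΦ2 fun ℓ => h ℓ * softThreshold (lam * μ ℓ) (α ℓ)
  have t1 := sqrt_integral_sq_sub_le hH2 hL2 hf2
  have t2 := sqrt_integral_sq_sub_le hL2 hp2 hf2
  have t3 : Real.sqrt (∫ y, ((∑ ℓ, c ℓ * Φ ℓ y) - f y) ^ 2 ∂ω) ≤ Real.sqrt V * r := by
    refine hbound hr0 ?_
    calc ∫ y, ((∑ ℓ, c ℓ * Φ ℓ y) - f y) ^ 2 ∂ω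
        ≤ ∫ _, r ^ 2 ∂ω := by
          refine integral_mono (hp2.sub hf2).integrable_sq (integrable_const _) fun y => ?_
          exact (sub_sq_comm _ _).trans_le (hsq y)
      _ = V * r ^ 2 := by rw [integral_const, hV]; rfl
  -- Discrete orthonormality makes hyperinterpolation reproduce `p`.
  have hcoef : ∀ ℓ, α ℓ - c ℓ
      = ∑ j, w j * (f (x j) - ∑ i, c i * Φ i (x j)) * Φ ℓ (x j) := by
    intro ℓ
    have e : ∑ j, w j * (∑ i, c i * Φ i (x j)) * Φ ℓ (x j) = c ℓ := by
      simp_rw [Finset.mul_sum, Finset.sum_mul]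
      rw [Finset.sum_comm]
      have e' : ∀ i, ∑ j, w j * (c i * Φ i (x j)) * Φ ℓ (x j)
          = c i * if i = ℓ then 1 else 0 := by
        intro i
        rw [← hdorth i ℓ, Finset.mul_sum]
        exact Finset.sum_congr rfl fun j _ => by ring
      simp_rw [e']
      simp
    simp_rw [mul_sub, sub_mul, Finset.sum_sub_distrib]
    rw [e, hα ℓ]
  have t4 : Real.sqrt (∫ y, ((∑ ℓ, α ℓ * Φ ℓ y) - ∑ ℓ, c ℓ * Φ ℓ y) ^ 2 ∂ω)
      ≤ Real.sqrt V * r := by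
    refine hbound hr0 ?_
    simp_rw [← Finset.sum_sub_distrib, ← sub_mul]
    rw [integral_sum_mul_sq hΦ2 horth]
    simp_rw [hcoef]
    refine (discrete_bessel (fun ℓ j => Φ ℓ (x j)) w hw hdorth
      (fun j => f (x j) - ∑ i, c i * Φ i (x j))).trans ?_
    rw [← hwV, Finset.sum_mul]
    exact Finset.sum_le_sum fun j _ => mul_le_mul_of_nonneg_left (hsq (x j)) (hw j).le
  linarith
end

section
/- Let d be a positive integer, α ∈ ℝ^d, and h₁,…,h_d ∈ [0,1]. For λ > 0 define the hybrid coefficient vector β(λ) ∈ ℝ^d by β(λ)_ℓ = h_ℓ·S_λ(α_ℓ), where S_λ is the soft thresholding operator. Then for all 0 < λ ≤ λ' and every ℓ ∈ {1,…,d}, β(λ)_ℓ² − 2β(λ)_ℓ α_ℓ ≤ β(λ')_ℓ² − 2β(λ')_ℓ α_ℓ ≤ 0. Consequently J(β(λ)) = ∑_{ℓ=1}^d (β(λ)_ℓ² − 2β(λ)_ℓ α_ℓ) is nonpositive and nonincreasing as λ decreases: J(β(λ)) ≤ J(β(λ')) ≤ 0. -/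
/-!
As a function of one coordinate, `z² - 2zα` is a parabola with vertex `α` vanishing at `0`, so
it decreases as `z` moves from `0` to `α`. Increasing the threshold moves `S_k(α)` along this
segment towards `0` (`softThreshold_between`), and scaling by a filter value in `[0, 1]` preserves
this configuration (`parabola_le`). The claims about `J` follow by summing over coordinates.
-/

open Finset

/-- Soft thresholding with a larger threshold shrinks further towards `0` on the segment
from `0` to `a`. -/
lemma softThreshold_between {k k' : ℝ} (hk : 0 ≤ k) (hle : k ≤ k') (a : ℝ) :
    (0 ≤ softThreshold k' a ∧ softThreshold k' a ≤ softThreshold k a ∧ softThreshold k a ≤ a) ∨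
    (a ≤ softThreshold k a ∧ softThreshold k a ≤ softThreshold k' a ∧ softThreshold k' a ≤ 0) := by
  unfold softThreshold
  rcases le_total 0 a with ha | ha
  · left
    rw [min_eq_left (by linarith), min_eq_left (by linarith)]
    simp only [add_zero]
    exact ⟨le_max_left _ _, max_le_max le_rfl (by linarith), max_le ha (by linarith)⟩
  · right
    rw [max_eq_left (by linarith), max_eq_left (by linarith)]
    simp only [zero_add]
    exact ⟨le_min ha (by linarith), min_le_min le_rfl (by linarith), min_le_left _ _⟩

/-- The parabola `z ↦ z² - 2za` has its vertex at `a`, so it decreases along the segment from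
`0` to `a`; a filter value `t ∈ [0, 1]` keeps both points on that segment and in the same order. -/
lemma parabola_le {t a x y : ℝ} (ht : t ∈ Set.Icc (0 : ℝ) 1)
    (hxy : (0 ≤ y ∧ y ≤ x ∧ x ≤ a) ∨ (a ≤ x ∧ x ≤ y ∧ y ≤ 0)) :
    (t * x) ^ 2 - 2 * (t * x) * a ≤ (t * y) ^ 2 - 2 * (t * y) * a ∧
      (t * y) ^ 2 - 2 * (t * y) * a ≤ 0 := by
  obtain ⟨h0, h1⟩ := ht
  rcases hxy with ⟨hy, hyx, hxa⟩ | ⟨hax, hxy, hy⟩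
  · have e1 : 0 ≤ t * y := mul_nonneg h0 hy
    have e2 : t * y ≤ t * x := mul_le_mul_of_nonneg_left hyx h0
    have e3 : t * x ≤ x := mul_le_of_le_one_left (hy.trans hyx) h1
    constructor <;> nlinarith
  · have e1 : t * y ≤ 0 := mul_nonpos_of_nonneg_of_nonpos h0 hy
    have e2 : t * x ≤ t * y := mul_le_mul_of_nonneg_left hxy h0
    have e3 : x ≤ t * x := by nlinarith
    constructor <;> nlinarith

/-- monotonicity of the summands of `J` in the regularization
parameter: for `0 < λ ≤ λ'` and `β(λ)_ℓ = h_ℓ·S_λ(α_ℓ)`, each summand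
`β(λ)_ℓ² − 2β(λ)_ℓ α_ℓ` is `≤` the corresponding one for `λ'` and nonpositive;
consequently `J(β(λ)) ≤ J(β(λ')) ≤ 0`. -/
theorem J_monotone_in_lambda
    (d : ℕ) (hd : 0 < d)
    (α : Fin d → ℝ)
    (h : Fin d → ℝ) (hh : ∀ ℓ, h ℓ ∈ Set.Icc (0 : ℝ) 1)
    (lam lam' : ℝ) (hlam : 0 < lam) (hle : lam ≤ lam')
    (β β' : Fin d → ℝ)
    (hβ : ∀ ℓ, β ℓ = h ℓ * softThreshold lam (α ℓ))
    (hβ' : ∀ ℓ, β' ℓ = h ℓ * softThreshold lam' (α ℓ)) :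
    (∀ ℓ : Fin d,
      β ℓ ^ 2 - 2 * β ℓ * α ℓ ≤ β' ℓ ^ 2 - 2 * β' ℓ * α ℓ ∧
      β' ℓ ^ 2 - 2 * β' ℓ * α ℓ ≤ 0) ∧
    (∑ ℓ, (β ℓ ^ 2 - 2 * β ℓ * α ℓ)) ≤ (∑ ℓ, (β' ℓ ^ 2 - 2 * β' ℓ * α ℓ)) ∧
    (∑ ℓ, (β' ℓ ^ 2 - 2 * β' ℓ * α ℓ)) ≤ 0 := by
  have key : ∀ ℓ : Fin d,
      β ℓ ^ 2 - 2 * β ℓ * α ℓ ≤ β' ℓ ^ 2 - 2 * β' ℓ * α ℓ ∧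
      β' ℓ ^ 2 - 2 * β' ℓ * α ℓ ≤ 0 := fun ℓ => by
    rw [hβ, hβ']
    exact parabola_le (hh ℓ) (softThreshold_between hlam.le hle (α ℓ))
  exact ⟨key, Finset.sum_le_sum fun ℓ _ => (key ℓ).1, Finset.sum_nonpos fun ℓ _ => (key ℓ).2⟩
end

section
/- Let d be a positive integer, α ∈ ℝ^d, λ > 0 and h₁,…,h_d ∈ [0,1]. Define the hard thresholding coefficient vector ν by ν_ℓ = η_H(α_ℓ, λ), the Lasso coefficient vector γ by γ_ℓ = S_λ(α_ℓ), and the hybrid coefficient vector β by β_ℓ = h_ℓ·S_λ(α_ℓ). Then with J(z) = ∑_{ℓ=1}^d (z_ℓ² − 2 z_ℓ α_ℓ), the chain of inequalities J(ν) ≤ J(γ) ≤ J(β) ≤ 0 holds. -/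
open Finset

/-!
The functional `J` is a sum of one-variable terms `z ^ 2 - 2 * z * a = (z - a) ^ 2 - a ^ 2`, so each
inequality is proved coordinatewise. Hard thresholding either attains the minimum `-a ^ 2` or agrees
with soft thresholding (both vanish). For the other two inequalities, the soft-thresholded value `s`
lies between `0` and `a`, that is `s ^ 2 ≤ s * a`; hence `t ↦ (t * s) ^ 2 - 2 * (t * s) * a` is
nonincreasing on `[0, 1]`, and its values at `1`, `h`, `0` are the terms of `γ`, `β` and `0`.
-/

lemma softThreshold_eq_zero {k a : ℝ} (ha : |a| ≤ k) : softThreshold k a = 0 := by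
  obtain ⟨h1, h2⟩ := abs_le.mp ha
  rw [softThreshold, max_eq_left (by linarith), min_eq_left (by linarith), add_zero]

/-- Soft thresholding shrinks `a` towards `0` without changing its sign. -/
lemma softThreshold_sq_le {k : ℝ} (hk : 0 < k) (a : ℝ) :
    softThreshold k a ^ 2 ≤ softThreshold k a * a := by
  rcases le_or_gt |a| k with ha | ha
  · simp [softThreshold_eq_zero ha]
  · rcases lt_abs.mp ha with h1 | h1
    · rw [softThreshold, max_eq_right (by linarith), min_eq_left (by linarith)]
      nlinarith
    · rw [softThreshold, max_eq_left (by linarith), min_eq_right (by linarith)]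
      nlinarith

lemma hardThreshold_term_le (k a : ℝ) :
    hardThreshold a k ^ 2 - 2 * hardThreshold a k * a ≤
      softThreshold k a ^ 2 - 2 * softThreshold k a * a := by
  unfold hardThreshold
  split_ifs with ha
  · nlinarith [sq_nonneg (softThreshold k a - a)]
  · simp [softThreshold_eq_zero (not_lt.mp ha)]

/-- with `J(z) = ∑_ℓ (z_ℓ² − 2 z_ℓ α_ℓ)`, the hard thresholding (`ν`),
Lasso (`γ`) and hybrid (`β`) coefficient vectors satisfy `J(ν) ≤ J(γ) ≤ J(β) ≤ 0`. -/
theorem J_chain_inequalities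
    (d : ℕ) (hd : 0 < d)
    (α : Fin d → ℝ) (lam : ℝ) (hlam : 0 < lam)
    (h : Fin d → ℝ) (hh : ∀ ℓ, h ℓ ∈ Set.Icc (0 : ℝ) 1)
    (ν γ β : Fin d → ℝ)
    (hν : ∀ ℓ, ν ℓ = hardThreshold (α ℓ) lam)
    (hγ : ∀ ℓ, γ ℓ = softThreshold lam (α ℓ))
    (hβ : ∀ ℓ, β ℓ = h ℓ * softThreshold lam (α ℓ)) :
    (∑ ℓ, (ν ℓ ^ 2 - 2 * ν ℓ * α ℓ)) ≤ (∑ ℓ, (γ ℓ ^ 2 - 2 * γ ℓ * α ℓ)) ∧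
    (∑ ℓ, (γ ℓ ^ 2 - 2 * γ ℓ * α ℓ)) ≤ (∑ ℓ, (β ℓ ^ 2 - 2 * β ℓ * α ℓ)) ∧
    (∑ ℓ, (β ℓ ^ 2 - 2 * β ℓ * α ℓ)) ≤ 0 := by
  refine ⟨Finset.sum_le_sum fun ℓ _ => ?_, Finset.sum_le_sum fun ℓ _ => ?_,
    Finset.sum_nonpos fun ℓ _ => ?_⟩
  · rw [hν, hγ]
    exact hardThreshold_term_le lam (α ℓ)
  · rw [hγ, hβ]
    obtain ⟨h0, h1⟩ := hh ℓ
    have hs := softThreshold_sq_le hlam (α ℓ)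
    generalize softThreshold lam (α ℓ) = s at hs ⊢
    -- the difference is `(1 - h) * (2 * (s * a - s ^ 2) + (1 - h) * s ^ 2)`
    nlinarith [mul_nonneg (sub_nonneg.mpr h1) (sub_nonneg.mpr hs),
      mul_nonneg (sq_nonneg (1 - h ℓ)) (sq_nonneg s)]
  · rw [hβ]
    obtain ⟨h0, h1⟩ := hh ℓ
    have hs := softThreshold_sq_le hlam (α ℓ)
    generalize softThreshold lam (α ℓ) = s at hs ⊢
    -- the negated term is `h * (2 * (s * a - s ^ 2) + s ^ 2 + (1 - h) * s ^ 2)`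
    nlinarith [mul_nonneg h0 (sub_nonneg.mpr hs), mul_nonneg h0 (sq_nonneg s),
      mul_nonneg (mul_nonneg h0 (sub_nonneg.mpr h1)) (sq_nonneg s)]
end
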